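/- Let (X, d) be a metric space, let B ⊆ X be a finite nonempty set with weight function w : B → [0,∞), and let Z ⊆ X be a finite nonempty set. Then there exists a nonempty subset C ⊆ B with |C| ≤ |Z| such that Σ_{b∈B} w(b)·d(b,C) ≤ 2·Σ_{b∈B} w(b)·d(b,Z). In other words, restricting the candidate centers to lie in B loses at most a factor of 2 in the k-median clustering cost of the weighted set (B, w). -/

import Mathlib

open Finset

/-- Distance from a point to a finite set of centers in a metric space:
`d(x,C) = min_{c ∈ C} d(x,c)`. -/
noncomputable def distToSet {X : Type*} [MetricSpace X] (x : X) (C : Finset X) : ℝ :=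
  sInf ((fun c => dist x c) '' C)

theorem distToSet_le_dist {X : Type*} [MetricSpace X] (x : X) {C : Finset X} {c : X}
    (hc : c ∈ C) : distToSet x C ≤ dist x c :=
  csInf_le (C.finite_toSet.image _).bddBelow ⟨c, hc, rfl⟩

theorem exists_mem_dist_eq_distToSet {X : Type*} [MetricSpace X] (x : X) {C : Finset X}
    (hC : C.Nonempty) : ∃ c ∈ C, dist x c = distToSet x C :=
  (hC.to_set.image _).csInf_mem (C.finite_toSet.image _)

/-- Factor-2 center restriction: for a finite nonempty weighted set `(B, w)` in a metric
space and any finite nonempty center set `Z`, there is a nonempty `C ⊆ B` with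
`|C| ≤ |Z|` whose clustering cost is at most twice that of `Z`. -/
theorem center_restriction_factor_two {X : Type*} [MetricSpace X]
    (B : Finset X) (hB : B.Nonempty) (w : X → ℝ) (hw : ∀ b ∈ B, 0 ≤ w b)
    (Z : Finset X) (hZ : Z.Nonempty) :
    ∃ C : Finset X, C ⊆ B ∧ C.Nonempty ∧ C.card ≤ Z.card ∧
      ∑ b ∈ B, w b * distToSet b C ≤ 2 * ∑ b ∈ B, w b * distToSet b Z := by
  classical
  choose p hpB hp using fun z : X => exists_mem_dist_eq_distToSet z hB
  refine ⟨Z.image p, image_subset_iff.2 fun z _ => hpB z, hZ.image p, card_image_le, ?_⟩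
  rw [mul_sum]
  refine sum_le_sum fun b hb => ?_
  obtain ⟨z, hz, hbz⟩ := exists_mem_dist_eq_distToSet b hZ
  have hle : distToSet b (Z.image p) ≤ 2 * distToSet b Z := by
    have hC := distToSet_le_dist b (mem_image_of_mem p hz)
    have hpz := distToSet_le_dist z hb
    have htri := dist_triangle b z (p z)
    rw [← hp z, dist_comm z b] at hpz
    linarith
  calc w b * distToSet b (Z.image p) ≤ w b * (2 * distToSet b Z) :=
        mul_le_mul_of_nonneg_left hle (hw b hb)
    _ = 2 * (w b * distToSet b Z) := by ring
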